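/- Let Ω ⊆ ℂ be a nonempty open set with nonempty frontier ∂Ω. For z ∉ ∂Ω and ε > 0, the function w ↦ 1/(z − w)³ is Lebesgue-integrable on {w ∈ Ω : |z − w| > ε}; set G(z, ε) = (2/π) ∫_{w ∈ Ω, |z−w| > ε} 1/(z − w)³ dm(w). Then: (i) for each z ∉ ∂Ω, G(z, ε) is the same for all ε with 0 < ε < dist(z, ∂Ω); (ii) the function z ↦ G(z, dist(z, ∂Ω)/2), defined on ℂ ∖ ∂Ω, is complex-differentiable at every z ∉ ∂Ω with derivative (−6/π) ∫_{w ∈ Ω, |z−w| > ε} 1/(z − w)⁴ dm(w) for any ε with 0 < ε < dist(z, ∂Ω). -/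

import Mathlib

/-!
Write `B = {w : |z - w| ≤ ε}`. The exterior of a disc centred at `z` is invariant under rotation
about `z`, and a rotation by a unit number `c` multiplies `(z - w)⁻ᵏ` by `c⁻ᵏ`; choosing `cᵏ = -1`
shows that `(z - w)⁻ᵏ` has integral zero over the exterior of `B` (`integral_exterior`).

Let `d = dist(z, ∂Ω) > ε`. The disc `ball z d` is connected and misses `∂Ω`, so it lies in `Ω` or
in `Ωᶜ`. If it lies in `Ωᶜ`, the truncation removes nothing, and the truncated integral is the
integral over `Ω`. If it lies in `Ω`, then the exterior of `B` is the disjoint union of `Ω \ B` and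
`Ωᶜ`, so the truncated integral is minus the integral over `Ωᶜ`. Either way it is independent of `ε`,
and equal to `±` the integral over a fixed set at positive distance from `z`
(`integral_trunc_of_notMem`, `integral_trunc_of_mem`). The alternative and the set are the same for
all points near `z`, so the derivative is obtained by differentiating under the integral sign
(`hasDerivAt_integral_far`).
-/

open MeasureTheory

/-- `G(z, ε) = (2/π) ∫_{w ∈ Ω, |z−w| > ε} (z − w)⁻³ dm(w)`, the truncated version of
`∂B(χ_Ω)(z)`. -/
noncomputable def truncDerivBeurling (Ω : Set ℂ) (z : ℂ) (ε : ℝ) : ℂ :=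
  (2 / (Real.pi : ℂ)) * ∫ w in {w : ℂ | w ∈ Ω ∧ ε < ‖z - w‖}, 1 / (z - w) ^ 3

/-- Integrability away from the pole, by comparison with `(1 + ‖u‖) ^ (-k)` in real
dimension `2 < k`. -/
lemma integrableOn_exterior (z : ℂ) {ε : ℝ} (hε : 0 < ε) {k : ℕ} (hk : 3 ≤ k) :
    IntegrableOn (fun w : ℂ => 1 / (z - w) ^ k) {w : ℂ | ε < ‖z - w‖} := by
  have h1 : Integrable (fun u : ℂ => (1 + ‖u‖) ^ (-(k : ℝ))) := by
    apply integrable_one_add_norm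
    rw [Complex.finrank_real_complex]
    exact_mod_cast hk
  have h2 : Integrable (fun w : ℂ => (1 / ε + 1) ^ k * (1 + ‖z - w‖) ^ (-(k : ℝ))) :=
    (h1.comp_sub_left z).const_mul _
  refine Integrable.mono' h2.integrableOn
    (Measurable.aestronglyMeasurable (by fun_prop)) ?_
  have hm : MeasurableSet {w : ℂ | ε < ‖z - w‖} :=
    measurableSet_lt measurable_const (by fun_prop)
  filter_upwards [ae_restrict_mem hm] with w hw
  have hw : ε < ‖z - w‖ := hw
  have hp : 0 < ‖z - w‖ := hε.trans hw
  rw [Real.rpow_neg (by positivity), Real.rpow_natCast, norm_div, norm_pow, norm_one,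
    ← div_eq_mul_inv, div_le_div_iff₀ (by positivity) (by positivity), one_mul, ← mul_pow]
  refine pow_le_pow_left₀ (by positivity) ?_ k
  have : 1 ≤ 1 / ε * ‖z - w‖ := by
    rw [one_div, inv_mul_eq_div, one_le_div hε]
    exact hw.le
  linarith

/-- The integral over the exterior of a centred disc changes sign under rotation about the centre
by `c` with `c ^ k = -1`. -/
lemma integral_exterior (z : ℂ) (ε : ℝ) {k : ℕ} (hk : k ≠ 0) :
    ∫ w in {w : ℂ | ε < ‖z - w‖}, 1 / (z - w) ^ k = 0 := by
  obtain ⟨c, hc⟩ : ∃ c : Circle, (c : ℂ) ^ k = -1 := by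
    refine ⟨Circle.exp (Real.pi / k), ?_⟩
    rw [Circle.coe_exp, ← Complex.exp_nat_mul, ← Complex.exp_pi_mul_I]
    congr 1
    have : (k : ℂ) ≠ 0 := by exact_mod_cast hk
    push_cast
    field_simp
  let f : ℂ → ℂ := Set.indicator {u : ℂ | ε < ‖u‖} (fun u => 1 / u ^ k)
  have hm : MeasurableSet {w : ℂ | ε < ‖z - w‖} :=
    measurableSet_lt measurable_const (by fun_prop)
  have h1 : ∫ w in {w : ℂ | ε < ‖z - w‖}, 1 / (z - w) ^ k = ∫ u, f u := by
    rw [← integral_indicator hm, ← integral_sub_left_eq_self f volume z]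
    rfl
  have h2 : ∫ u, f (rotation c u) = ∫ u, f u :=
    (rotation c).measurePreserving.integral_comp
      (rotation c).toHomeomorph.measurableEmbedding f
  have h3 : ∀ u, f (rotation c u) = -f u := by
    intro u
    by_cases hu : ε < ‖u‖
    · simp [f, hu, mul_pow, hc, inv_neg, Circle.norm_coe]
    · simp [f, hu, Circle.norm_coe]
  rw [h1]
  simp_rw [h3, integral_neg] at h2
  linear_combination (-1 / 2 : ℂ) * h2

/-- The disc is connected and misses the frontier, so it cannot leave `Ω`. -/
lemma ball_infDist_subset {Ω : Set ℂ} {z : ℂ} (hz : z ∈ Ω) :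
    Metric.ball z (Metric.infDist z (frontier Ω)) ⊆ Ω := by
  rcases (Metric.ball z (Metric.infDist z (frontier Ω))).eq_empty_or_nonempty with he | hn
  · simp [he]
  have hz' := Metric.mem_ball_self (Metric.nonempty_ball.1 hn) (x := z)
  by_contra hcon
  obtain ⟨y, hy, hyΩ⟩ := Set.not_subset.1 hcon
  have hc := (convex_ball z (Metric.infDist z (frontier Ω))).isPreconnected
  have hcov : ∀ x ∈ Metric.ball z (Metric.infDist z (frontier Ω)),
      x ∈ closure Ω → x ∈ interior Ω := fun x hx hxc => by
    by_contra hxi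
    exact Metric.ball_infDist_subset_compl hx ⟨hxc, hxi⟩
  obtain ⟨x, -, hxi, hxc⟩ := hc (interior Ω) (closure Ω)ᶜ isOpen_interior
    isClosed_closure.isOpen_compl
    (fun x hx => by
      by_cases h : x ∈ closure Ω
      · exact Or.inl (hcov x hx h)
      · exact Or.inr h)
    ⟨z, hz', hcov z hz' (subset_closure hz)⟩
    ⟨y, hy, fun h => hyΩ (interior_subset (hcov y hy h))⟩
  exact hxc (subset_closure (interior_subset hxi))

lemma ball_infDist_subset_compl {Ω : Set ℂ} {z : ℂ} (hz : z ∉ Ω) :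
    Metric.ball z (Metric.infDist z (frontier Ω)) ⊆ Ωᶜ := by
  rw [← frontier_compl]
  exact ball_infDist_subset hz

/-- Off `Ω`, the truncation at a radius below the distance to the frontier has no effect. -/
lemma integral_trunc_of_notMem {Ω : Set ℂ} {z : ℂ} (hz : z ∉ Ω) {ε : ℝ}
    (hε : ε < Metric.infDist z (frontier Ω)) (k : ℕ) :
    ∫ w in {w : ℂ | w ∈ Ω ∧ ε < ‖z - w‖}, 1 / (z - w) ^ k = ∫ w in Ω, 1 / (z - w) ^ k := by
  congr 2
  ext w
  refine ⟨fun h => h.1, fun h => ⟨h, ?_⟩⟩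
  by_contra hcon
  refine absurd h (ball_infDist_subset_compl hz ?_)
  rw [Metric.mem_ball', dist_eq_norm]
  linarith

/-- Inside `Ω`, the truncated integral over `Ω` is minus the integral over the complement. -/
lemma integral_trunc_of_mem {Ω : Set ℂ} (hopen : IsOpen Ω) {z : ℂ} (hz : z ∈ Ω) {ε : ℝ}
    (h0 : 0 < ε) (hε : ε < Metric.infDist z (frontier Ω)) {k : ℕ} (hk : 3 ≤ k) :
    ∫ w in {w : ℂ | w ∈ Ω ∧ ε < ‖z - w‖}, 1 / (z - w) ^ k = -∫ w in Ωᶜ, 1 / (z - w) ^ k := by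
  have hun : {w : ℂ | w ∈ Ω ∧ ε < ‖z - w‖} ∪ Ωᶜ = {w : ℂ | ε < ‖z - w‖} := by
    ext w
    constructor
    · rintro (h | h)
      · exact h.2
      · by_contra hcon
        have hcon : ¬ ε < ‖z - w‖ := hcon
        refine h (ball_infDist_subset hz ?_)
        rw [Metric.mem_ball', dist_eq_norm]
        linarith
    · intro h
      by_cases hw : w ∈ Ω
      · exact Or.inl ⟨hw, h⟩
      · exact Or.inr hw
  have hint := integrableOn_exterior z h0 hk
  have hd : Disjoint {w : ℂ | w ∈ Ω ∧ ε < ‖z - w‖} Ωᶜ :=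
    Set.disjoint_left.2 fun w h h' => h' h.1
  have h := integral_exterior z ε (k := k) (by omega)
  rw [← hun] at h hint
  rw [setIntegral_union hd hopen.measurableSet.compl hint.left_of_union hint.right_of_union] at h
  exact eq_neg_of_add_eq_zero_left h

/-- Differentiation under the integral sign over a set at positive distance from `z`. -/
lemma hasDerivAt_integral_far {S : Set ℂ} (hS : MeasurableSet S) {z : ℂ} {r : ℝ} (hr : 0 < r)
    (hd : Metric.ball z r ⊆ Sᶜ) :
    HasDerivAt (fun x : ℂ => ∫ w in S, 1 / (x - w) ^ 3) (-3 * ∫ w in S, 1 / (z - w) ^ 4) z := by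
  have hfar : ∀ w ∈ S, r ≤ ‖z - w‖ := by
    intro w hw
    by_contra hcon
    refine absurd hw (hd ?_)
    rw [Metric.mem_ball', dist_eq_norm]
    linarith
  have hsub : S ⊆ {w : ℂ | r / 2 < ‖z - w‖} := fun w hw => by
    have := hfar w hw
    show r / 2 < ‖z - w‖
    linarith
  have hI : ∀ k : ℕ, 3 ≤ k → IntegrableOn (fun w : ℂ => 1 / (z - w) ^ k) S := fun k hk =>
    (integrableOn_exterior z (half_pos hr) hk).mono_set hsub
  -- On the half-radius disc `‖x - w‖ ≥ ‖z - w‖ / 2` for `w ∈ S`, whence the factor `2 ^ 4`.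
  have key : ∀ w ∈ S, ∀ x ∈ Metric.ball z (r / 2), ‖z - w‖ / 2 ≤ ‖x - w‖ := by
    intro w hw x hx
    rw [Metric.mem_ball', dist_eq_norm] at hx
    have h1 := hfar w hw
    have h2 := norm_sub_le_norm_sub_add_norm_sub z x w
    linarith
  have h := hasDerivAt_integral_of_dominated_loc_of_deriv_le (μ := volume.restrict S)
    (F := fun x w : ℂ => 1 / (x - w) ^ 3) (F' := fun x w : ℂ => -3 * (1 / (x - w) ^ 4))
    (x₀ := z) (s := Metric.ball z (r / 2)) (bound := fun w => 48 * ‖1 / (z - w) ^ 4‖)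
    (Metric.ball_mem_nhds z (half_pos hr))
    (Filter.Eventually.of_forall fun x => Measurable.aestronglyMeasurable (by fun_prop))
    (hI 3 le_rfl) (Measurable.aestronglyMeasurable (by fun_prop)) ?_
    ((hI 4 (by norm_num)).norm.const_mul 48) ?_
  · simpa only [integral_const_mul] using h.2
  · filter_upwards [ae_restrict_mem hS] with w hw x hx
    have h1 := key w hw x hx
    have h2 : 0 < ‖z - w‖ := hr.trans_le (hfar w hw)
    have h3 : (‖z - w‖ / 2) ^ 4 ≤ ‖x - w‖ ^ 4 := pow_le_pow_left₀ (by positivity) h1 4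
    have h4 : 1 / ‖x - w‖ ^ 4 ≤ 1 / (‖z - w‖ / 2) ^ 4 :=
      one_div_le_one_div_of_le (by positivity) h3
    simp only [norm_mul, norm_neg, norm_div, norm_pow, norm_one]
    have h5 : 1 / (‖z - w‖ / 2) ^ 4 = 16 * (1 / ‖z - w‖ ^ 4) := by
      field_simp
      norm_num
    rw [show ‖(3 : ℂ)‖ = 3 by simp]
    linarith
  · filter_upwards [ae_restrict_mem hS] with w hw x hx
    have h1 := key w hw x hx
    have h2 : 0 < ‖z - w‖ := hr.trans_le (hfar w hw)
    have h3 : x - w ≠ 0 := norm_pos_iff.1 (by linarith)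
    have h4 := (((hasDerivAt_id x).sub_const w).pow 3).inv (pow_ne_zero 3 h3)
    simp only [one_div]
    convert! h4 using 1
    simp only [id, Pi.pow_apply]
    field_simp
    norm_num

theorem statement6 (Ω : Set ℂ) (hne : Ω.Nonempty) (hopen : IsOpen Ω)
    (hfr : (frontier Ω).Nonempty) :
    (∀ z ∉ frontier Ω, ∀ ε > 0,
        IntegrableOn (fun w : ℂ => 1 / (z - w) ^ 3) {w : ℂ | w ∈ Ω ∧ ε < ‖z - w‖}) ∧
    (∀ z ∉ frontier Ω, ∀ ε₁ ε₂ : ℝ, 0 < ε₁ → ε₁ < Metric.infDist z (frontier Ω) →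
        0 < ε₂ → ε₂ < Metric.infDist z (frontier Ω) →
        truncDerivBeurling Ω z ε₁ = truncDerivBeurling Ω z ε₂) ∧
    (∀ z ∉ frontier Ω, ∀ ε : ℝ, 0 < ε → ε < Metric.infDist z (frontier Ω) →
        HasDerivAt
          (fun z' : ℂ => truncDerivBeurling Ω z' (Metric.infDist z' (frontier Ω) / 2))
          ((-6 / (Real.pi : ℂ)) * ∫ w in {w : ℂ | w ∈ Ω ∧ ε < ‖z - w‖}, 1 / (z - w) ^ 4)
          z) := by
  have hpos : ∀ z ∉ frontier Ω, 0 < Metric.infDist z (frontier Ω) := fun z hz =>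
    (isClosed_frontier.notMem_iff_infDist_pos hfr).1 hz
  refine ⟨?_, ?_, ?_⟩
  · intro z _ ε hε
    exact (integrableOn_exterior z hε le_rfl).mono_set fun w hw => hw.2
  · intro z _ ε₁ ε₂ h1 h1' h2 h2'
    unfold truncDerivBeurling
    by_cases hz : z ∈ Ω
    · rw [integral_trunc_of_mem hopen hz h1 h1' le_rfl,
        integral_trunc_of_mem hopen hz h2 h2' le_rfl]
    · rw [integral_trunc_of_notMem hz h1', integral_trunc_of_notMem hz h2']
  · intro z hz ε h0 hε
    have hd := hpos z hz
    have hball := Metric.ball_mem_nhds z hd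
    have hfr' : ∀ x ∈ Metric.ball z (Metric.infDist z (frontier Ω)),
        0 < Metric.infDist x (frontier Ω) := fun x hx =>
      hpos x (Metric.ball_infDist_subset_compl hx)
    by_cases hzΩ : z ∈ Ω
    · have hsub := ball_infDist_subset hzΩ
      rw [integral_trunc_of_mem hopen hzΩ h0 hε (by norm_num)]
      have h := (hasDerivAt_integral_far hopen.measurableSet.compl hd
        (by rwa [compl_compl])).const_mul (-2 / (Real.pi : ℂ))
      refine (h.congr_deriv (by ring)).congr_of_eventuallyEq ?_
      filter_upwards [hball] with x hx
      have hx' := hfr' x hx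
      rw [truncDerivBeurling, integral_trunc_of_mem hopen (hsub hx) (half_pos hx')
        (half_lt_self hx') le_rfl]
      ring
    · have hsub := ball_infDist_subset_compl hzΩ
      rw [integral_trunc_of_notMem hzΩ hε]
      have h := (hasDerivAt_integral_far hopen.measurableSet hd hsub).const_mul
        (2 / (Real.pi : ℂ))
      refine (h.congr_deriv (by ring)).congr_of_eventuallyEq ?_
      filter_upwards [hball] with x hx
      rw [truncDerivBeurling, integral_trunc_of_notMem (hsub hx) (half_lt_self (hfr' x hx))]
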